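/- Let N be a positive integer, h = (h₁,h₂) ∈ ℤ², τ ∈ H, t > 0, and ε, ε' ∈ (−1/2, 1/2) \ {0}. Then all the series below converge absolutely and the Poisson-summation identity holds: τ^{−1}·Θ̃_h(−1/τ, t; ε, ε') = ( e(2εε'/N) / N ) · Σ_{δ = (δ₁,δ₂), 0 ≤ δ₁,δ₂ ≤ N−1} e( (δ₁h₂ + δ₂h₁)/N ) · Θ̃_δ(τ, t; −ε', ε), where Θ̃_h(τ, t; ε, ε') := Σ_{x₁ ≡ h₁ (mod N), x₂ ≡ h₂ (mod N)} φ̃_τ( ι_t(x₁+ε, x₂+ε) )·e( ε'·(x₁+x₂+2ε)/N ). -/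

import Mathlib

open MeasureTheory Filter Set

noncomputable section

/-- `e(z) = exp(2πiz)` -/
def eC (z : ℂ) : ℂ := Complex.exp (2 * Real.pi * Complex.I * z)

/-- The complementary error function `erfc(x) = (2/√π)∫_x^∞ e^{-r²} dr`. -/
def erfc (x : ℝ) : ℝ := (2 / Real.sqrt Real.pi) * ∫ r in Set.Ioi x, Real.exp (-(r ^ 2))

/-- `φ*_τ(x,y) = e(((y²-x²)/2)τ)·sgn(x)·erfc(√(2πv)|x|)`. -/
def phiStar (τ : ℂ) (x y : ℝ) : ℂ :=
  eC ((((y : ℂ) ^ 2 - (x : ℂ) ^ 2) / 2) * τ) * (Real.sign x : ℂ) *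
    (erfc (Real.sqrt (2 * Real.pi * τ.im) * |x|) : ℂ)

/-- `φ⁺_τ(x,y) = e(((y²-x²)/2)τ)·sgn(x)·1_{y²>x²}`. -/
def phiPlus (τ : ℂ) (x y : ℝ) : ℂ :=
  eC ((((y : ℂ) ^ 2 - (x : ℂ) ^ 2) / 2) * τ) * (Real.sign x : ℂ) *
    (if x ^ 2 < y ^ 2 then 1 else 0)

/-- `φ̃_τ = φ⁺_τ - φ*_τ`. -/
def phiTilde (τ : ℂ) (x y : ℝ) : ℂ := phiPlus τ x y - phiStar τ x y

/-- The isometry `ι_t(x₁,x₂) = ((t⁻¹x₁+tx₂)/√(2N), (t⁻¹x₁-tx₂)/√(2N))`. -/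
def iota (N : ℕ) (t x₁ x₂ : ℝ) : ℝ × ℝ :=
  ((t⁻¹ * x₁ + t * x₂) / Real.sqrt (2 * N), (t⁻¹ * x₁ - t * x₂) / Real.sqrt (2 * N))

/-- The term of the doubly shifted theta series `Θ̃_h(τ,t;ε,ε')` indexed by `p ∈ ℤ²`,
corresponding to `x_j = h_j + N·p_j`:
`φ̃_τ(ι_t(x₁+ε, x₂+ε))·e(ε'·(x₁+x₂+2ε)/N)`. -/
def thetaTerm (N : ℕ) (h : ℤ × ℤ) (τ : ℂ) (t ε ε' : ℝ) (p : ℤ × ℤ) : ℂ :=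
  phiTilde τ
      (iota N t (((h.1 + N * p.1 : ℤ) : ℝ) + ε) (((h.2 + N * p.2 : ℤ) : ℝ) + ε)).1
      (iota N t (((h.1 + N * p.1 : ℤ) : ℝ) + ε) (((h.2 + N * p.2 : ℤ) : ℝ) + ε)).2 *
    eC (((ε' * (((h.1 + N * p.1 : ℤ) : ℝ) + ((h.2 + N * p.2 : ℤ) : ℝ) + 2 * ε) / N : ℝ) : ℂ))

/-
On the curve `s ↦ ι_s(X)` the function `φ̃_τ` is, up to an additive constant, an antiderivative of
the weight one Siegel theta kernel with respect to `ds/s`, so that `φ̃_τ(ι_t(X))` is the integral of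
the kernel over `s = exp w ∈ (0, ∞)` against half the sign of `log t - w`. For fixed `s` the Siegel
theta series converges rapidly, and Poisson summation in one variable turns it into a series whose
kernel visibly transforms under `τ ↦ -1/τ`; a second application of the same summation gives the
inversion formula. Since the `L¹`-norms of the kernel in `w` decay like `exp(-c|x₁x₂|)`, which is
summable because the shifts keep `x₁` and `x₂` away from `0`, the inversion formula may be
integrated term by term. The sum over `δ` comes from splitting `ℤ²` into residue classes modulo `N`.
-/

theorem eC_add (x y : ℂ) : eC (x + y) = eC x * eC y := by
  rw [eC, eC, eC, mul_add, Complex.exp_add]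

theorem eC_intCast (n : ℤ) : eC n = 1 := by
  rw [eC, mul_comm]
  exact Complex.exp_int_mul_two_pi_mul_I n

theorem norm_eC (z : ℂ) : ‖eC z‖ = Real.exp (-2 * Real.pi * z.im) := by
  simp [eC, Complex.norm_exp]

theorem norm_eC_ofReal (x : ℝ) : ‖eC x‖ = 1 := by
  simp [norm_eC]

/-! ### Poisson summation in one variable -/

theorem im_neg_one_div (τ : ℂ) : (-1 / τ).im = τ.im / Complex.normSq τ := by
  simp [neg_div]

theorem im_neg_one_div_pos {τ : ℂ} (hτ : 0 < τ.im) : 0 < (-1 / τ).im := by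
  rw [im_neg_one_div]
  exact div_pos hτ (Complex.normSq_pos.mpr (by rintro rfl; simp at hτ))

theorem tsum_linear_mul_jacobiTheta₂_term {τ : ℂ} (hτ : 0 < τ.im) (c z : ℂ) :
    ∑' n : ℤ, (c + n) * jacobiTheta₂_term n z τ =
      1 / (-Complex.I * τ) ^ (1 / 2 : ℂ) * Complex.exp (-Real.pi * Complex.I * z ^ 2 / τ) *
        ∑' m : ℤ, (c + (m - z) / τ) * jacobiTheta₂_term m (z / τ) (-1 / τ) := by
  have linear_series : ∀ {σ : ℂ}, 0 < σ.im → ∀ c d w : ℂ,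
      ∑' n : ℤ, (c + d * n) * jacobiTheta₂_term n w σ =
        c * jacobiTheta₂ w σ + d / (2 * Real.pi * Complex.I) * jacobiTheta₂' w σ := by
    intro σ hσ c d w
    rw [← (((hasSum_jacobiTheta₂_term w hσ).mul_left c).add
      ((hasSum_jacobiTheta₂'_term w hσ).mul_left (d / (2 * Real.pi * Complex.I)))).tsum_eq]
    refine tsum_congr fun n => ?_
    rw [jacobiTheta₂'_term]
    field_simp [Complex.two_pi_I_ne_zero]
  have hτ0 : τ ≠ 0 := by rintro rfl; simp at hτ
  have h₁ := linear_series hτ c 1 z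
  have h₂ := linear_series (im_neg_one_div_pos hτ) (c - z / τ) (1 / τ) (z / τ)
  simp only [one_mul] at h₁
  rw [h₁, jacobiTheta₂_functional_equation, jacobiTheta₂'_functional_equation,
    show (fun m : ℤ => (c + (m - z) / τ) * jacobiTheta₂_term m (z / τ) (-1 / τ)) =
      fun m : ℤ => (c - z / τ + 1 / τ * m) * jacobiTheta₂_term m (z / τ) (-1 / τ) by
      funext m; ring, h₂]
  field_simp
  ring

theorem neg_I_mul_I_mul_ofReal_cpow_half {x : ℝ} (hx : 0 ≤ x) :
    (-Complex.I * (Complex.I * x)) ^ (1 / 2 : ℂ) = Real.sqrt x := by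
  rw [← mul_assoc, neg_mul, Complex.I_mul_I, neg_neg, one_mul,
    show (1 / 2 : ℂ) = (1 / 2 : ℝ) by norm_num, ← Complex.ofReal_cpow hx, ← Real.sqrt_eq_rpow]

theorem tsum_linear_mul_gaussian {α L : ℝ} (hα : 0 < α) (hL : 0 < L) (l a θ : ℂ) :
    ∑' n : ℤ, (l + (a + L * n)) *
        Complex.exp (-Real.pi * α * (a + L * n) ^ 2 + 2 * Real.pi * Complex.I * (a + L * n) * θ) =
      1 / (L * Real.sqrt α) * ∑' m : ℤ, (l - Complex.I * (m / L - θ) / α) *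
        Complex.exp (-Real.pi * (m / L - θ) ^ 2 / α + 2 * Real.pi * Complex.I * a * (m / L)) := by
  have hαC : (α : ℂ) ≠ 0 := by exact_mod_cast hα.ne'
  have hLC : (L : ℂ) ≠ 0 := by exact_mod_cast hL.ne'
  set T : ℂ := Complex.I * (L ^ 2 * α : ℝ) with hT
  set z : ℂ := L * (θ + Complex.I * α * a) with hz
  set E : ℂ := Complex.exp (-Real.pi * α * a ^ 2 + 2 * Real.pi * Complex.I * a * θ) with hE
  have hTim : 0 < T.im := by
    rw [hT, Complex.I_mul_im, Complex.ofReal_re]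
    positivity
  have hsqrt : (-Complex.I * T) ^ (1 / 2 : ℂ) = L * Real.sqrt α := by
    rw [hT, neg_I_mul_I_mul_ofReal_cpow_half (by positivity), Real.sqrt_mul (by positivity),
      Real.sqrt_sq hL.le, Complex.ofReal_mul]
  have direct_term : ∀ n : ℤ,
      (l + (a + L * n)) *
          Complex.exp (-Real.pi * α * (a + L * n) ^ 2 +
            2 * Real.pi * Complex.I * (a + L * n) * θ) =
        L * E * (((l + a) / L + n) * jacobiTheta₂_term n z T) := by
    intro n
    rw [mul_mul_mul_comm, jacobiTheta₂_term, hE, ← Complex.exp_add, hz, hT]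
    congr 1
    · field_simp
      ring
    congr 1
    push_cast
    linear_combination (-(Real.pi * α * L * n * (2 * a + L * n))) * Complex.I_sq
  have dual_term : ∀ m : ℤ,
      (l - Complex.I * (m / L - θ) / α) *
          Complex.exp (-Real.pi * (m / L - θ) ^ 2 / α + 2 * Real.pi * Complex.I * a * (m / L)) =
        L * E * Complex.exp (-Real.pi * Complex.I * z ^ 2 / T) *
          (((l + a) / L + (m - z) / T) * jacobiTheta₂_term m (z / T) (-1 / T)) := by
    intro m
    rw [mul_assoc (L : ℂ), mul_mul_mul_comm, jacobiTheta₂_term, hE, ← Complex.exp_add,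
      ← Complex.exp_add, hz, hT]
    congr 1
    · push_cast
      field_simp
      linear_combination (-(m - L * θ)) * Complex.I_sq
    · congr 1
      push_cast
      field_simp
      linear_combination (α ^ 2 * a ^ 2 * L ^ 2) * Complex.I_sq
  simp only [direct_term, dual_term, tsum_mul_left]
  rw [tsum_linear_mul_jacobiTheta₂_term hTim, hsqrt]
  ring

/-! ### Inversion of the Siegel theta series -/

/-- The Siegel theta kernel of signature `(1,1)` and weight one, attached to
`(τ, (x, y)) ∈ ℍ × ℝ²`. Its pullback along `ι_s` is `s d/ds` of the pullback of `φ̃_τ`. -/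
def siegelKernel (τ : ℂ) (x y : ℝ) : ℂ :=
  ((-2 * Real.sqrt (2 * τ.im) * y : ℝ) : ℂ) *
    eC ((y ^ 2 * τ - x ^ 2 * (starRingEnd ℂ) τ) / 2)

/-- The partial Fourier transform, in the first variable, of `siegelKernel τ ∘ ι_s`, up to
normalization. -/
def dualKernel (N : ℕ) (τ : ℂ) (s M B : ℝ) : ℂ :=
  (M + (starRingEnd ℂ) τ * B) *
    (Real.exp (-(Real.pi * s ^ 2 / (τ.im * N)) * Complex.normSq (M + τ * B)) : ℂ)

theorem siegelKernel_iota_mul_eC {N : ℕ} (hN : 0 < N) {τ : ℂ} (hτ : 0 < τ.im) {s : ℝ}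
    (hs : s ≠ 0) (A B η : ℝ) :
    siegelKernel τ (iota N s A B).1 (iota N s A B).2 * eC (η * A / N : ℝ) =
      -2 * Real.sqrt (τ.im / N) / s * Complex.exp (-Real.pi * τ.im * s ^ 2 * B ^ 2 / N) *
        ((-(s ^ 2 * B) + A) * Complex.exp (-Real.pi * (τ.im / (s ^ 2 * N) : ℝ) * A ^ 2 +
          2 * Real.pi * Complex.I * A * ((η - τ.re * B) / N))) := by
  have hNC : (N : ℂ) ≠ 0 := by exact_mod_cast hN.ne'
  have hsC : (s : ℂ) ≠ 0 := by exact_mod_cast hs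
  have h2N : ((Real.sqrt (2 * N) : ℝ) : ℂ) ^ 2 = 2 * N := by
    exact_mod_cast Real.sq_sqrt (show (0 : ℝ) ≤ 2 * N by positivity)
  have hsqrt : Real.sqrt (2 * τ.im) / Real.sqrt (2 * N) = Real.sqrt (τ.im / N) := by
    rw [← Real.sqrt_div (by positivity), mul_div_mul_left _ _ two_ne_zero]
  have hconj : (starRingEnd ℂ) τ = τ.re - τ.im * Complex.I := by
    apply Complex.ext <;> simp
  have hτre : τ = τ.re + τ.im * Complex.I := (Complex.re_add_im τ).symm
  rw [siegelKernel, eC, eC, iota, mul_assoc, ← Complex.exp_add, mul_mul_mul_comm,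
    ← Complex.exp_add, ← hsqrt]
  congr 2
  · push_cast
    field_simp
    ring
  · rw [hconj]
    nth_rewrite 1 [hτre]
    push_cast
    rw [div_pow, div_pow, h2N]
    field_simp
    linear_combination (2 * τ.im * (A ^ 2 + B ^ 2 * s ^ 4)) * Complex.I_sq

theorem dualKernel_mul_eC {N : ℕ} (hN : 0 < N) {τ : ℂ} (hτ : 0 < τ.im) {s : ℝ}
    (hs : s ≠ 0) (a B η x : ℝ) :
    dualKernel N τ s (N * x - η) B * eC (a * x : ℝ) =
      Complex.I * τ.im / s ^ 2 * Complex.exp (-Real.pi * τ.im * s ^ 2 * B ^ 2 / N) *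
        ((-(s ^ 2 * B) - Complex.I * (x - (η - τ.re * B) / N) / (τ.im / (s ^ 2 * N) : ℝ)) *
          Complex.exp (-Real.pi * (x - (η - τ.re * B) / N) ^ 2 / (τ.im / (s ^ 2 * N) : ℝ) +
            2 * Real.pi * Complex.I * a * x)) := by
  have hNC : (N : ℂ) ≠ 0 := by exact_mod_cast hN.ne'
  have hsC : (s : ℂ) ≠ 0 := by exact_mod_cast hs
  have hvC : (τ.im : ℂ) ≠ 0 := by exact_mod_cast hτ.ne'
  have hconj : (starRingEnd ℂ) τ = τ.re - τ.im * Complex.I := by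
    apply Complex.ext <;> simp
  have hnormSq : Complex.normSq ((N * x - η : ℝ) + τ * B) =
      (N * x - η + τ.re * B) ^ 2 + (τ.im * B) ^ 2 := by
    simp [Complex.normSq_apply, sq]
  rw [dualKernel, hnormSq, Complex.ofReal_exp, eC, mul_assoc, ← Complex.exp_add,
    mul_mul_mul_comm, ← Complex.exp_add]
  congr 2
  · rw [hconj]
    push_cast
    field_simp
    linear_combination (N * x - (η - τ.re * B)) * Complex.I_sq
  · push_cast
    field_simp
    ring

theorem tsum_siegelKernel {N : ℕ} (hN : 0 < N) {τ : ℂ} (hτ : 0 < τ.im) {s L : ℝ}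
    (hs : 0 < s) (hL : 0 < L) (a B η : ℝ) :
    ∑' n : ℤ, siegelKernel τ (iota N s (a + L * n) B).1 (iota N s (a + L * n) B).2 *
        eC (η * (a + L * n) / N : ℝ) =
      2 * Complex.I * s ^ 2 / (τ.im * L) *
        ∑' m : ℤ, dualKernel N τ s (N * (m / L) - η) B * eC (a * (m / L) : ℝ) := by
  have hN' : (0 : ℝ) < N := by exact_mod_cast hN
  have hsC : (s : ℂ) ≠ 0 := by exact_mod_cast hs.ne'
  have hLC : (L : ℂ) ≠ 0 := by exact_mod_cast hL.ne'
  have hvC : (τ.im : ℂ) ≠ 0 := by exact_mod_cast hτ.ne'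
  have hrC : (Real.sqrt (τ.im / N) : ℂ) ≠ 0 := by
    exact_mod_cast (Real.sqrt_pos.mpr (div_pos hτ hN')).ne'
  have hsqrt : Real.sqrt (τ.im / (s ^ 2 * N)) = Real.sqrt (τ.im / N) / s := by
    rw [mul_comm, ← div_div, Real.sqrt_div (by positivity), Real.sqrt_sq hs.le]
  have poisson := tsum_linear_mul_gaussian (α := τ.im / (s ^ 2 * N)) (by positivity) hL
    (-(s ^ 2 * B)) a ((η - τ.re * B) / N)
  simp only [siegelKernel_iota_mul_eC hN hτ hs.ne', dualKernel_mul_eC hN hτ hs.ne', tsum_mul_left]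
  push_cast at poisson ⊢
  rw [poisson, hsqrt, ← mul_assoc, ← mul_assoc]
  congr 1
  push_cast
  field_simp
  rw [Complex.I_sq]

/-- The general term of the theta series attached to a function `φ` on `ℝ²`, with independent
characteristics `(a, b)` and `(η₁, η₂)` and lattice `(a + Lℤ) × (b + Lℤ)`. -/
def latticeTerm (N : ℕ) (φ : ℝ → ℝ → ℂ) (s L a b η₁ η₂ : ℝ) (p : ℤ × ℤ) : ℂ :=
  φ (iota N s (a + L * p.1) (b + L * p.2)).1 (iota N s (a + L * p.1) (b + L * p.2)).2 *
    eC ((η₁ * (a + L * p.1) + η₂ * (b + L * p.2)) / N : ℝ)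

/-- The general term of the series obtained from that of `latticeTerm N (siegelKernel τ)` by
Poisson summation in the first variable. -/
def dualTerm (N : ℕ) (τ : ℂ) (s L a b η₁ η₂ : ℝ) (q : ℤ × ℤ) : ℂ :=
  dualKernel N τ s (N * (q.1 / L) - η₁) (b + L * q.2) *
    eC (a * (q.1 / L) + η₂ * (b + L * q.2) / N : ℝ)

theorem summable_exp_neg_mul_abs_add_mul {c L : ℝ} (hc : 0 < c) (hL : 0 < L) (a : ℝ) :
    Summable fun n : ℤ => Real.exp (-c * |a + L * n|) := by
  have geometric : Summable fun n : ℕ => Real.exp (n * (-(c * L))) :=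
    Real.summable_exp_nat_mul_iff.mpr (by nlinarith [mul_pos hc hL])
  have centered : Summable fun n : ℤ => Real.exp (-(c * L) * |(n : ℝ)|) :=
    Summable.of_nat_of_neg (geometric.congr fun n => by simp [mul_comm])
      (geometric.congr fun n => by simp [mul_comm])
  refine Summable.of_nonneg_of_le (fun n => (Real.exp_pos _).le) (fun n => ?_)
    (centered.mul_left (Real.exp (c * |a|)))
  rw [← Real.exp_add, Real.exp_le_exp]
  have triangle : |L * n| ≤ |a + L * n| + |a| := by
    simpa using abs_sub (a + L * n) a
  rw [abs_mul, abs_of_pos hL] at triangle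
  nlinarith

theorem exists_mul_abs_add_abs_le_norm {σ : ℂ} (hσ : 0 < σ.im) :
    ∃ c : ℝ, 0 < c ∧ ∀ x y : ℝ, c * (|x| + |y|) ≤ ‖(x + σ * y : ℂ)‖ := by
  set C : ℝ := 1 + |σ.re| / σ.im + 1 / σ.im with hC
  have hC0 : 0 < C := by positivity
  refine ⟨C⁻¹, by positivity, fun x y => ?_⟩
  set z : ℂ := x + σ * y with hz
  have hy : |y| ≤ ‖z‖ / σ.im := by
    rw [le_div_iff₀ hσ]
    simpa [hz, abs_mul, abs_of_pos hσ, mul_comm] using Complex.abs_im_le_norm z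
  have hx : |x| ≤ ‖z‖ + |σ.re| * (‖z‖ / σ.im) :=
    calc |x| = |z.re - σ.re * y| := by simp [hz]
      _ ≤ |z.re| + |σ.re| * |y| := by rw [← abs_mul]; exact abs_sub _ _
      _ ≤ _ := by gcongr; exact Complex.abs_re_le_norm z
  rw [inv_mul_le_iff₀ hC0]
  calc |x| + |y| ≤ ‖z‖ + |σ.re| * (‖z‖ / σ.im) + ‖z‖ / σ.im := add_le_add hx hy
    _ = C * ‖z‖ := by rw [hC]; ring

theorem mul_exp_neg_mul_sq_le {k : ℝ} (hk : 0 < k) (r : ℝ) :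
    r * Real.exp (-k * r ^ 2) ≤ Real.exp (1 / k) * Real.exp (-r) := by
  have hr : r ≤ Real.exp r := by linarith [Real.add_one_le_exp r]
  have complete_square : 1 / k - 2 * r + k * r ^ 2 = (k * r - 1) ^ 2 / k := by
    field_simp
    ring
  have hsq : 0 ≤ (k * r - 1) ^ 2 / k := by positivity
  calc r * Real.exp (-k * r ^ 2) ≤ Real.exp r * Real.exp (-k * r ^ 2) := by gcongr
    _ ≤ Real.exp (1 / k) * Real.exp (-r) := by
      rw [← Real.exp_add, ← Real.exp_add, Real.exp_le_exp]
      linarith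

theorem summable_norm_mul_exp_neg_mul_norm_sq {σ : ℂ} (hσ : 0 < σ.im) {k L₁ L₂ : ℝ} (hk : 0 < k)
    (hL₁ : 0 < L₁) (hL₂ : 0 < L₂) (a b : ℝ) :
    Summable fun p : ℤ × ℤ =>
      ‖((a + L₁ * p.1 : ℝ) + σ * (b + L₂ * p.2 : ℝ) : ℂ)‖ *
        Real.exp (-k * ‖((a + L₁ * p.1 : ℝ) + σ * (b + L₂ * p.2 : ℝ) : ℂ)‖ ^ 2) := by
  obtain ⟨c, hc, hle⟩ := exists_mul_abs_add_abs_le_norm hσ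
  have product := (summable_exp_neg_mul_abs_add_mul hc hL₁ a).mul_of_nonneg
    (summable_exp_neg_mul_abs_add_mul hc hL₂ b)
    (fun _ => (Real.exp_pos _).le) (fun _ => (Real.exp_pos _).le)
  refine Summable.of_nonneg_of_le (fun p => by positivity) (fun p => ?_)
    (product.mul_left (Real.exp (1 / k)))
  refine (mul_exp_neg_mul_sq_le hk _).trans ?_
  rw [← Real.exp_add (-c * _)]
  gcongr
  linarith [hle (a + L₁ * p.1) (b + L₂ * p.2)]

theorem norm_dualKernel (N : ℕ) (τ : ℂ) (s M B : ℝ) :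
    ‖dualKernel N τ s M B‖ = ‖(M + τ * B : ℂ)‖ *
      Real.exp (-(Real.pi * s ^ 2 / (τ.im * N)) * ‖(M + τ * B : ℂ)‖ ^ 2) := by
  have hconj : (M + (starRingEnd ℂ) τ * B : ℂ) = (starRingEnd ℂ) (M + τ * B) := by simp
  rw [dualKernel, norm_mul, hconj, RCLike.norm_conj, Complex.norm_real, Real.norm_eq_abs,
    Real.abs_exp, Complex.normSq_eq_norm_sq]

theorem summable_dualTerm {N : ℕ} (hN : 0 < N) {τ : ℂ} (hτ : 0 < τ.im) {s L : ℝ} (hs : s ≠ 0)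
    (hL : 0 < L) (a b η₁ η₂ : ℝ) : Summable (dualTerm N τ s L a b η₁ η₂) := by
  have hN' : (0 : ℝ) < N := by exact_mod_cast hN
  refine Summable.of_norm ((summable_norm_mul_exp_neg_mul_norm_sq hτ
    (k := Real.pi * s ^ 2 / (τ.im * N)) (by positivity) (div_pos hN' hL) hL (-η₁) b).congr
    fun q => ?_)
  rw [dualTerm, norm_mul, norm_eC_ofReal, mul_one, norm_dualKernel,
    show N * (q.1 / L) - η₁ = -η₁ + N / L * q.1 by ring]

theorem norm_siegelKernel (τ : ℂ) (x y : ℝ) :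
    ‖siegelKernel τ x y‖ =
      2 * Real.sqrt (2 * τ.im) * |y| * Real.exp (-Real.pi * τ.im * (x ^ 2 + y ^ 2)) := by
  have him : ((y ^ 2 * τ - x ^ 2 * (starRingEnd ℂ) τ) / 2).im = τ.im * (x ^ 2 + y ^ 2) / 2 := by
    rw [Complex.div_ofNat_im, Complex.sub_im, ← Complex.ofReal_pow, ← Complex.ofReal_pow,
      Complex.im_ofReal_mul, Complex.im_ofReal_mul, Complex.conj_im]
    ring
  rw [siegelKernel, norm_mul, norm_eC, him, Complex.norm_real, Real.norm_eq_abs, abs_mul, abs_mul,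
    abs_neg, abs_two, abs_of_nonneg (Real.sqrt_nonneg _)]
  ring_nf

theorem iota_sq_add_sq {N : ℕ} {s : ℝ} (hs : s ≠ 0) (A B : ℝ) :
    (iota N s A B).1 ^ 2 + (iota N s A B).2 ^ 2 =
      ‖(A + (s ^ 2 * Complex.I : ℂ) * B : ℂ)‖ ^ 2 / (s ^ 2 * N) := by
  have h2N : Real.sqrt (2 * N) ^ 2 = 2 * N := Real.sq_sqrt (by positivity)
  rw [iota, div_pow, div_pow, h2N, ← Complex.normSq_eq_norm_sq]
  have : Complex.normSq (A + (s ^ 2 * Complex.I : ℂ) * B) = A ^ 2 + (s ^ 2 * B) ^ 2 := by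
    rw [← Complex.ofReal_pow]
    simp [Complex.normSq_apply, sq]
  rw [this]
  field_simp
  ring

theorem summable_latticeTerm_siegelKernel {N : ℕ} (hN : 0 < N) {τ : ℂ} (hτ : 0 < τ.im)
    {s L : ℝ} (hs : s ≠ 0) (hL : 0 < L) (a b η₁ η₂ : ℝ) :
    Summable (latticeTerm N (siegelKernel τ) s L a b η₁ η₂) := by
  have hσ : 0 < (s ^ 2 * Complex.I : ℂ).im := by
    rw [← Complex.ofReal_pow, Complex.im_ofReal_mul, Complex.I_im, mul_one]
    positivity
  refine Summable.of_norm_bounded ((summable_norm_mul_exp_neg_mul_norm_sq hσ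
    (k := Real.pi * τ.im / (s ^ 2 * N)) (by positivity) hL hL a b).mul_left
    (2 * Real.sqrt (2 * τ.im) / Real.sqrt (s ^ 2 * N))) fun p => ?_
  set A := a + L * p.1
  set B := b + L * p.2
  set r : ℝ := ‖(A + (s ^ 2 * Complex.I : ℂ) * B : ℂ)‖
  have hy : |(iota N s A B).2| ≤ r / Real.sqrt (s ^ 2 * N) :=
    calc |(iota N s A B).2| ≤ Real.sqrt ((iota N s A B).1 ^ 2 + (iota N s A B).2 ^ 2) :=
          Real.abs_le_sqrt (le_add_of_nonneg_left (sq_nonneg _))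
      _ = r / Real.sqrt (s ^ 2 * N) := by
          rw [iota_sq_add_sq hs, Real.sqrt_div (sq_nonneg _), Real.sqrt_sq (norm_nonneg _)]
  rw [latticeTerm, norm_mul, norm_eC_ofReal, mul_one, norm_siegelKernel, iota_sq_add_sq hs]
  calc _ ≤ 2 * Real.sqrt (2 * τ.im) * (r / Real.sqrt (s ^ 2 * N)) *
        Real.exp (-Real.pi * τ.im * (r ^ 2 / (s ^ 2 * N))) := by gcongr
    _ = _ := by
      rw [show -Real.pi * τ.im * (r ^ 2 / (s ^ 2 * N)) = -(Real.pi * τ.im / (s ^ 2 * N)) * r ^ 2 by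
        ring]
      ring

theorem tsum_latticeTerm_siegelKernel_eq_tsum_dualTerm {N : ℕ} (hN : 0 < N) {τ : ℂ} (hτ : 0 < τ.im)
    {s L : ℝ} (hs : 0 < s) (hL : 0 < L) (a b η₁ η₂ : ℝ) :
    ∑' p, latticeTerm N (siegelKernel τ) s L a b η₁ η₂ p =
      2 * Complex.I * s ^ 2 / (τ.im * L) * ∑' q, dualTerm N τ s L a b η₁ η₂ q := by
  have iterate : ∀ {f : ℤ × ℤ → ℂ}, Summable f → ∑' p, f p = ∑' n, ∑' m, f (m, n) :=
    fun hf => hf.tsum_prod.trans (Summable.tsum_comm (f := Function.curry _) hf).symm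
  rw [iterate (summable_latticeTerm_siegelKernel hN hτ hs.ne' hL a b η₁ η₂),
    iterate (summable_dualTerm hN hτ hs.ne' hL a b η₁ η₂), ← tsum_mul_left]
  refine tsum_congr fun n => ?_
  simp only [latticeTerm, dualTerm, add_div,
    Complex.ofReal_add, eC_add, ← mul_assoc, tsum_mul_right]
  rw [tsum_siegelKernel hN hτ hs hL]

theorem dualKernel_neg_one_div {N : ℕ} {τ : ℂ} (hτ : 0 < τ.im) (s M B : ℝ) :
    τ⁻¹ / (-1 / τ).im * dualKernel N (-1 / τ) s M B = 1 / τ.im * dualKernel N τ s (-B) M := by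
  have hτ0 : τ ≠ 0 := by rintro rfl; simp at hτ
  have hc0 : (starRingEnd ℂ) τ ≠ 0 := (map_ne_zero _).mpr hτ0
  have hn : 0 < Complex.normSq τ := Complex.normSq_pos.mpr hτ0
  have hvC : (τ.im : ℂ) ≠ 0 := by exact_mod_cast hτ.ne'
  have hnormSq : Complex.normSq (M + -1 / τ * B) =
      Complex.normSq ((-B : ℝ) + τ * M) / Complex.normSq τ := by
    rw [← map_div₀]
    congr 1
    push_cast
    field_simp
    ring
  have hexp : -(Real.pi * s ^ 2 / ((-1 / τ).im * N)) * Complex.normSq (M + -1 / τ * B) =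
      -(Real.pi * s ^ 2 / (τ.im * N)) * Complex.normSq ((-B : ℝ) + τ * M) := by
    rw [hnormSq, im_neg_one_div]
    field_simp
  have hlinear : τ⁻¹ / (-1 / τ).im * (M + (starRingEnd ℂ) (-1 / τ) * B) =
      1 / τ.im * ((-B : ℝ) + (starRingEnd ℂ) τ * M) := by
    rw [im_neg_one_div, map_div₀, map_neg, map_one, Complex.ofReal_div, ← Complex.mul_conj]
    push_cast
    field_simp
    ring
  rw [dualKernel, dualKernel, hexp, ← mul_assoc, hlinear, mul_assoc]

theorem dualTerm_neg_one_div {N : ℕ} (hN : 0 < N) {τ : ℂ} (hτ : 0 < τ.im) (s : ℝ) {L : ℝ}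
    (hL : L ≠ 0) (a b η₁ η₂ : ℝ) (q : ℤ × ℤ) :
    τ⁻¹ / (-1 / τ).im * dualTerm N (-1 / τ) s L a b η₁ η₂ q =
      eC ((a * η₁ + b * η₂) / N : ℝ) / τ.im *
        dualTerm N τ s (N / L) (-η₂) (-η₁) b a (-q.2, q.1) := by
  have hN' : (N : ℝ) ≠ 0 := by exact_mod_cast hN.ne'
  have hM : N * (((-q.2 : ℤ) : ℝ) / (N / L)) - b = -(b + L * q.2) := by
    push_cast
    field_simp
    ring
  have hB : -η₁ + N / L * q.1 = N * (q.1 / L) - η₁ := by ring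
  have hphase : a * (q.1 / L) + η₂ * (b + L * q.2) / N = (a * η₁ + b * η₂) / N +
      (-η₂ * (((-q.2 : ℤ) : ℝ) / (N / L)) + a * (N * (q.1 / L) - η₁) / N) := by
    push_cast
    field_simp
    ring
  rw [dualTerm, dualTerm, ← mul_assoc, dualKernel_neg_one_div hτ, hM, hB, hphase,
    Complex.ofReal_add, eC_add]
  ring

theorem tsum_latticeTerm_siegelKernel_neg_one_div {N : ℕ} (hN : 0 < N) {τ : ℂ} (hτ : 0 < τ.im)
    {s L : ℝ} (hs : 0 < s) (hL : 0 < L) (a b η₁ η₂ : ℝ) :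
    τ⁻¹ * ∑' p, latticeTerm N (siegelKernel (-1 / τ)) s L a b η₁ η₂ p =
      N / L ^ 2 * eC ((a * η₁ + b * η₂) / N : ℝ) *
        ∑' p, latticeTerm N (siegelKernel τ) s (N / L) (-η₂) (-η₁) b a p := by
  have hN' : (0 : ℝ) < N := by exact_mod_cast hN
  have hNC : (N : ℂ) ≠ 0 := by exact_mod_cast hN.ne'
  have hLC : (L : ℂ) ≠ 0 := by exact_mod_cast hL.ne'
  have hτ' := im_neg_one_div_pos hτ
  have reindex := ((Equiv.prodComm ℤ ℤ).trans ((Equiv.neg ℤ).prodCongr (Equiv.refl ℤ))).tsum_eq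
    (dualTerm N τ s (N / L) (-η₂) (-η₁) b a)
  have inversion : τ⁻¹ / (-1 / τ).im * ∑' q, dualTerm N (-1 / τ) s L a b η₁ η₂ q =
      eC ((a * η₁ + b * η₂) / N : ℝ) / τ.im *
        ∑' q, dualTerm N τ s (N / L) (-η₂) (-η₁) b a q := by
    rw [← reindex, ← tsum_mul_left, ← tsum_mul_left]
    exact tsum_congr fun q => dualTerm_neg_one_div hN hτ s hL.ne' a b η₁ η₂ q
  rw [tsum_latticeTerm_siegelKernel_eq_tsum_dualTerm hN hτ' hs hL,
    tsum_latticeTerm_siegelKernel_eq_tsum_dualTerm hN hτ hs (div_pos hN' hL)]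
  calc _ = 2 * Complex.I * s ^ 2 / L *
        (τ⁻¹ / (-1 / τ).im * ∑' q, dualTerm N (-1 / τ) s L a b η₁ η₂ q) := by ring
    _ = _ := by
        rw [inversion]
        push_cast
        field_simp

/-! ### `φ̃` as an integral of the Siegel kernel -/

/-- The error function `erf(x) = (2/√π)∫_0^x e^{-r²} dr`; unlike `erfc(|·|)`, which occurs in
`φ*_τ`, it is smooth and odd. -/
def erf (x : ℝ) : ℝ := (2 / Real.sqrt Real.pi) * ∫ r in (0 : ℝ)..x, Real.exp (-(r ^ 2))

theorem two_div_sqrt_pi_mul_integral_Ioi_zero :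
    2 / Real.sqrt Real.pi * ∫ r in Set.Ioi (0 : ℝ), Real.exp (-(r ^ 2)) = 1 := by
  have gaussian : ∫ r in Set.Ioi (0 : ℝ), Real.exp (-(r ^ 2)) = Real.sqrt Real.pi / 2 := by
    simpa using integral_gaussian_Ioi 1
  have : Real.sqrt Real.pi ≠ 0 := (Real.sqrt_pos.mpr Real.pi_pos).ne'
  rw [gaussian]
  field_simp

theorem integrable_exp_neg_sq : Integrable fun r : ℝ => Real.exp (-(r ^ 2)) := by
  simpa using integrable_exp_neg_mul_sq (b := 1) one_pos

theorem erfc_eq_one_sub_erf (x : ℝ) : erfc x = 1 - erf x := by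
  rw [erfc, erf, ← two_div_sqrt_pi_mul_integral_Ioi_zero,
    ← intervalIntegral.integral_interval_add_Ioi (a := 0) (b := x)
      integrable_exp_neg_sq.integrableOn integrable_exp_neg_sq.integrableOn]
  ring

theorem erf_neg (x : ℝ) : erf (-x) = -erf x := by
  have reflection :=
    intervalIntegral.integral_comp_neg (a := 0) (b := x) fun r : ℝ => Real.exp (-(r ^ 2))
  simp only [neg_sq, neg_zero] at reflection
  rw [erf, erf, reflection, intervalIntegral.integral_symm, mul_neg]

theorem hasDerivAt_erf (x : ℝ) :
    HasDerivAt erf (2 / Real.sqrt Real.pi * Real.exp (-(x ^ 2))) x := by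
  have hc : Continuous fun r : ℝ => Real.exp (-(r ^ 2)) := by fun_prop
  exact (intervalIntegral.integral_hasDerivAt_right (hc.intervalIntegrable _ _)
    (hc.stronglyMeasurableAtFilter _ _) hc.continuousAt).const_mul _

theorem tendsto_erf_atTop : Tendsto erf atTop (nhds 1) := by
  rw [← two_div_sqrt_pi_mul_integral_Ioi_zero]
  exact (intervalIntegral_tendsto_integral_Ioi (0 : ℝ) integrable_exp_neg_sq.integrableOn
    tendsto_id).const_mul _

theorem tendsto_erf_atBot : Tendsto erf atBot (nhds (-1)) :=
  (tendsto_erf_atTop.comp tendsto_neg_atBot_atTop).neg.congr fun x => by simp [erf_neg]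

theorem sign_mul_erfc_mul_abs (c x : ℝ) :
    Real.sign x * erfc (c * |x|) = Real.sign x - erf (c * x) := by
  rw [erfc_eq_one_sub_erf]
  rcases lt_trichotomy x 0 with hx | rfl | hx
  · rw [Real.sign_of_neg hx, abs_of_neg hx, mul_neg, erf_neg]
    ring
  · simp [erf]
  · rw [Real.sign_of_pos hx, abs_of_pos hx]
    ring

/-- The function `w ↦ erf(√(2πv)·x)`, where `(x, y) = ι_{exp w}(A, B)`. Multiplied by the constant
`e(-(AB/N)τ)` it is an antiderivative of the Siegel kernel along the geodesic `w ↦ ι_{exp w}`. -/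
def erfIota (N : ℕ) (τ : ℂ) (A B w : ℝ) : ℝ :=
  erf (Real.sqrt (2 * Real.pi * τ.im) * (iota N (Real.exp w) A B).1)

theorem hasDerivAt_iota_exp (N : ℕ) (A B w : ℝ) :
    HasDerivAt (fun w => (iota N (Real.exp w) A B).1) (-(iota N (Real.exp w) A B).2) w := by
  have hinv := ((Real.hasDerivAt_exp w).inv (Real.exp_pos w).ne').mul_const A
  refine ((hinv.add ((Real.hasDerivAt_exp w).mul_const B)).div_const
    (Real.sqrt (2 * N))).congr_deriv ?_
  rw [iota, ← neg_div]
  field_simp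
  ring

theorem hasDerivAt_erfIota (N : ℕ) (τ : ℂ) (A B w : ℝ) :
    HasDerivAt (erfIota N τ A B)
      (-2 * Real.sqrt (2 * τ.im) * (iota N (Real.exp w) A B).2 *
        Real.exp (-(Real.sqrt (2 * Real.pi * τ.im) * (iota N (Real.exp w) A B).1) ^ 2)) w := by
  refine ((hasDerivAt_erf _).comp w ((hasDerivAt_iota_exp N A B w).const_mul _)).congr_deriv ?_
  have : Real.sqrt Real.pi ≠ 0 := (Real.sqrt_pos.mpr Real.pi_pos).ne'
  rw [show 2 * Real.pi * τ.im = Real.pi * (2 * τ.im) by ring, Real.sqrt_mul Real.pi_pos.le]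
  field_simp

theorem tendsto_erfIota_atTop {N : ℕ} (hN : 0 < N) {τ : ℂ} (hτ : 0 < τ.im) (A : ℝ) {B : ℝ}
    (hB : B ≠ 0) : Tendsto (erfIota N τ A B) atTop (nhds (Real.sign B)) := by
  have hc : 0 < Real.sqrt (2 * Real.pi * τ.im) := by positivity
  have hq : 0 < Real.sqrt (2 * N) := by positivity
  have hA : Tendsto (fun w : ℝ => (Real.exp w)⁻¹ * A) atTop (nhds (0 * A)) :=
    Real.tendsto_exp_atTop.inv_tendsto_atTop.mul_const A
  rcases lt_or_gt_of_ne hB with hB | hB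
  · rw [Real.sign_of_neg hB]
    exact tendsto_erf_atBot.comp (((hA.add_atBot
      (Real.tendsto_exp_atTop.atTop_mul_const_of_neg hB)).atBot_div_const hq).const_mul_atBot hc)
  · rw [Real.sign_of_pos hB]
    exact tendsto_erf_atTop.comp (((hA.add_atTop
      (Real.tendsto_exp_atTop.atTop_mul_const hB)).atTop_div_const hq).const_mul_atTop hc)

theorem tendsto_erfIota_atBot {N : ℕ} (hN : 0 < N) {τ : ℂ} (hτ : 0 < τ.im) {A : ℝ} (hA : A ≠ 0)
    (B : ℝ) : Tendsto (erfIota N τ A B) atBot (nhds (Real.sign A)) := by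
  refine ((tendsto_erfIota_atTop hN hτ B hA).comp tendsto_neg_atBot_atTop).congr fun w => ?_
  simp only [Function.comp, erfIota, iota, Real.exp_neg, inv_inv, add_comm]

theorem iota_sq_sub_sq {N : ℕ} {s : ℝ} (hs : s ≠ 0) (A B : ℝ) :
    ((iota N s A B).2 ^ 2 - (iota N s A B).1 ^ 2) / 2 = -(A * B / N) := by
  have h2N : Real.sqrt (2 * N) ^ 2 = 2 * N := Real.sq_sqrt (by positivity)
  rw [iota, div_pow, div_pow, h2N]
  field_simp
  ring

theorem siegelKernel_eq_eC_mul_exp {τ : ℂ} (hτ : 0 ≤ τ.im) (x y : ℝ) :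
    siegelKernel τ x y = eC (((y ^ 2 - x ^ 2) / 2 : ℝ) * τ) *
      ((-2 * Real.sqrt (2 * τ.im) * y *
        Real.exp (-(Real.sqrt (2 * Real.pi * τ.im) * x) ^ 2) : ℝ) : ℂ) := by
  have hconj : (starRingEnd ℂ) τ = τ - 2 * τ.im * Complex.I := by
    apply Complex.ext <;> simp
    ring
  rw [siegelKernel, mul_pow, Real.sq_sqrt (by positivity),
    Complex.ofReal_mul (-2 * Real.sqrt (2 * τ.im) * y), mul_left_comm]
  congr 1
  rw [eC, eC, Complex.ofReal_exp, ← Complex.exp_add, hconj]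
  congr 1
  push_cast
  linear_combination (2 * Real.pi * x ^ 2 * τ.im) * Complex.I_sq

theorem siegelKernel_iota {N : ℕ} {τ : ℂ} (hτ : 0 ≤ τ.im) {s : ℝ} (hs : s ≠ 0) (A B : ℝ) :
    siegelKernel τ (iota N s A B).1 (iota N s A B).2 = eC (-(A * B / N : ℝ) * τ) *
      ((-2 * Real.sqrt (2 * τ.im) * (iota N s A B).2 *
        Real.exp (-(Real.sqrt (2 * Real.pi * τ.im) * (iota N s A B).1) ^ 2) : ℝ) : ℂ) := by
  rw [siegelKernel_eq_eC_mul_exp hτ, iota_sq_sub_sq hs, Complex.ofReal_neg]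

theorem hasDerivAt_eC_mul_erfIota (N : ℕ) {τ : ℂ} (hτ : 0 ≤ τ.im) (A B w : ℝ) :
    HasDerivAt (fun w => eC (-(A * B / N : ℝ) * τ) * (erfIota N τ A B w : ℂ))
      (siegelKernel τ (iota N (Real.exp w) A B).1 (iota N (Real.exp w) A B).2) w := by
  rw [siegelKernel_iota hτ (Real.exp_pos w).ne']
  exact (hasDerivAt_erfIota N τ A B w).ofReal_comp.const_mul _

theorem integrable_deriv_of_nonneg {g g' : ℝ → ℝ} {l m : ℝ} (hderiv : ∀ x, HasDerivAt g (g' x) x)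
    (hnonneg : ∀ x, 0 ≤ g' x) (hbot : Tendsto g atBot (nhds m)) (htop : Tendsto g atTop (nhds l)) :
    Integrable g' := by
  have right : IntegrableOn g' (Set.Ioi 0) :=
    integrableOn_Ioi_deriv_of_nonneg' (fun x _ => hderiv x) (fun x _ => hnonneg x) htop
  have left : IntegrableOn (fun x => g' (-x)) (Set.Ioi (-0)) := by
    rw [neg_zero]
    exact integrableOn_Ioi_deriv_of_nonneg' (g := fun x => -g (-x))
      (fun x _ => ((hderiv (-x)).comp x (hasDerivAt_neg x)).neg.congr_deriv (by simp))
      (fun x _ => hnonneg (-x)) (hbot.comp tendsto_neg_atTop_atBot).neg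
  rw [← integrableOn_univ, ← Set.Iio_union_Ici (a := (0 : ℝ)), integrableOn_union,
    integrableOn_Ici_iff_integrableOn_Ioi]
  exact ⟨by simpa using left.comp_neg_Iio, right⟩

-- Since `-|A|` and `|B|` have opposite signs, `erfIota N τ (-|A|) |B|` is monotone, so the last
-- factor, its derivative, is nonnegative and integrates to exactly `2`.
theorem norm_siegelKernel_iota_le {N : ℕ} {τ : ℂ} (hτ : 0 ≤ τ.im) {s : ℝ} (hs : 0 < s) (A B : ℝ) :
    ‖siegelKernel τ (iota N s A B).1 (iota N s A B).2‖ ≤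
      Real.exp (-(2 * Real.pi * τ.im / N) * (|A| * |B|)) *
        (-2 * Real.sqrt (2 * τ.im) * (iota N s (-|A|) |B|).2 *
          Real.exp (-(Real.sqrt (2 * Real.pi * τ.im) * (iota N s (-|A|) |B|).1) ^ 2)) := by
  have hy : |(iota N s A B).2| ≤ -(iota N s (-|A|) |B|).2 := by
    rw [iota, iota, abs_div, abs_of_nonneg (Real.sqrt_nonneg _), ← neg_div]
    gcongr
    refine (abs_sub _ _).trans_eq ?_
    rw [abs_mul, abs_mul, abs_of_pos hs, abs_of_pos (inv_pos.mpr hs)]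
    ring
  have hsq : (iota N s A B).1 ^ 2 + (iota N s A B).2 ^ 2 =
      (iota N s (-|A|) |B|).1 ^ 2 + (iota N s (-|A|) |B|).2 ^ 2 := by
    simp only [iota, div_pow, ← add_div]
    congr 1
    linear_combination -2 * s⁻¹ ^ 2 * sq_abs A - 2 * s ^ 2 * sq_abs B
  have hexp : -Real.pi * τ.im * ((iota N s (-|A|) |B|).1 ^ 2 + (iota N s (-|A|) |B|).2 ^ 2) =
      -(2 * Real.pi * τ.im / N) * (|A| * |B|) +
        -(Real.sqrt (2 * Real.pi * τ.im) * (iota N s (-|A|) |B|).1) ^ 2 := by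
    rw [mul_pow, Real.sq_sqrt (by positivity)]
    linear_combination (-2 * Real.pi * τ.im) * iota_sq_sub_sq (N := N) hs.ne' (-|A|) |B|
  rw [norm_siegelKernel, hsq, hexp, Real.exp_add]
  calc _ ≤ 2 * Real.sqrt (2 * τ.im) * -(iota N s (-|A|) |B|).2 * _ := by gcongr
    _ = _ := by ring

theorem continuous_siegelKernel_iota_exp (N : ℕ) (τ : ℂ) (A B : ℝ) :
    Continuous fun w => siegelKernel τ (iota N (Real.exp w) A B).1 (iota N (Real.exp w) A B).2 := by
  unfold siegelKernel eC iota
  fun_prop (disch := simp)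

theorem integrable_and_integral_norm_siegelKernel_iota_exp_le {N : ℕ} (hN : 0 < N) {τ : ℂ}
    (hτ : 0 < τ.im) {A B : ℝ} (hA : A ≠ 0) (hB : B ≠ 0) :
    Integrable (fun w =>
      siegelKernel τ (iota N (Real.exp w) A B).1 (iota N (Real.exp w) A B).2) ∧
    ∫ w, ‖siegelKernel τ (iota N (Real.exp w) A B).1 (iota N (Real.exp w) A B).2‖ ≤
      2 * Real.exp (-(2 * Real.pi * τ.im / N) * (|A| * |B|)) := by
  have hbound := fun w => norm_siegelKernel_iota_le (N := N) hτ.le (Real.exp_pos w) A B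
  have hderiv := hasDerivAt_erfIota N τ (-|A|) |B|
  have hbot : Tendsto (erfIota N τ (-|A|) |B|) atBot (nhds (-1)) := by
    have hA' : -|A| < 0 := neg_neg_of_pos (abs_pos.mpr hA)
    simpa [Real.sign_of_neg hA'] using tendsto_erfIota_atBot hN hτ hA'.ne |B|
  have htop : Tendsto (erfIota N τ (-|A|) |B|) atTop (nhds 1) := by
    have hB' : 0 < |B| := abs_pos.mpr hB
    simpa [Real.sign_of_pos hB'] using tendsto_erfIota_atTop hN hτ (-|A|) hB'.ne'
  have hnonneg := fun w =>
    nonneg_of_mul_nonneg_right ((norm_nonneg _).trans (hbound w)) (Real.exp_pos _)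
  have majorant := integrable_deriv_of_nonneg hderiv hnonneg hbot htop
  have hint := (majorant.const_mul _).mono'
    (continuous_siegelKernel_iota_exp N τ A B).aestronglyMeasurable (Eventually.of_forall hbound)
  refine ⟨hint, (integral_mono hint.norm (majorant.const_mul _) hbound).trans_eq ?_⟩
  rw [integral_const_mul, integral_of_hasDerivAt_of_tendsto hderiv majorant hbot htop]
  ring

theorem phiTilde_eq_eC_mul_erf (τ : ℂ) (x y : ℝ) :
    phiTilde τ x y = eC (((y ^ 2 - x ^ 2) / 2 : ℝ) * τ) *
      ((erf (Real.sqrt (2 * Real.pi * τ.im) * x) -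
        Real.sign x * (if x ^ 2 < y ^ 2 then 0 else 1) : ℝ) : ℂ) := by
  rw [← sub_sub_cancel (Real.sign x) (erf _), ← sign_mul_erfc_mul_abs, phiTilde, phiPlus, phiStar]
  split_ifs <;> push_cast <;> ring

theorem sign_iota_mul_ite {N : ℕ} (hN : 0 < N) {t : ℝ} (ht : 0 < t) {A B : ℝ} (hA : A ≠ 0)
    (hB : B ≠ 0) :
    Real.sign (iota N t A B).1 * (if (iota N t A B).1 ^ 2 < (iota N t A B).2 ^ 2 then 0 else 1) =
      (Real.sign A + Real.sign B) / 2 := by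
  have hN' : (0 : ℝ) < N := by exact_mod_cast hN
  have hq : 0 < Real.sqrt (2 * N) := by positivity
  have cone : (iota N t A B).1 ^ 2 < (iota N t A B).2 ^ 2 ↔ A * B < 0 := by
    have hquot : 0 < -(A * B / N) ↔ A * B < 0 := by
      rw [← neg_div, div_pos_iff_of_pos_right hN', neg_pos]
    rw [← hquot, ← iota_sq_sub_sq ht.ne', div_pos_iff_of_pos_right two_pos, sub_pos]
  simp only [cone]
  rcases lt_or_gt_of_ne hA with hA | hA <;> rcases lt_or_gt_of_ne hB with hB | hB
  · have hx : (iota N t A B).1 < 0 := div_neg_of_neg_of_pos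
      (add_neg (mul_neg_of_pos_of_neg (inv_pos.mpr ht) hA) (mul_neg_of_pos_of_neg ht hB)) hq
    rw [if_neg (mul_pos_of_neg_of_neg hA hB).not_gt, Real.sign_of_neg hA, Real.sign_of_neg hB,
      Real.sign_of_neg hx]
    norm_num
  · rw [if_pos (mul_neg_of_neg_of_pos hA hB), Real.sign_of_neg hA, Real.sign_of_pos hB]
    norm_num
  · rw [if_pos (mul_neg_of_pos_of_neg hA hB), Real.sign_of_pos hA, Real.sign_of_neg hB]
    norm_num
  · have hx : 0 < (iota N t A B).1 := by
      unfold iota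
      positivity
    rw [if_neg (mul_pos hA hB).not_gt, Real.sign_of_pos hA, Real.sign_of_pos hB,
      Real.sign_of_pos hx]
    norm_num

theorem phiTilde_iota {N : ℕ} (hN : 0 < N) (τ : ℂ) {t : ℝ} (ht : 0 < t) {A B : ℝ} (hA : A ≠ 0)
    (hB : B ≠ 0) :
    phiTilde τ (iota N t A B).1 (iota N t A B).2 = eC (-(A * B / N : ℝ) * τ) *
      ((erfIota N τ A B (Real.log t) - (Real.sign A + Real.sign B) / 2 : ℝ) : ℂ) := by
  rw [phiTilde_eq_eC_mul_erf, sign_iota_mul_ite hN ht hA hB, iota_sq_sub_sq ht.ne', erfIota,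
    Real.exp_log ht, Complex.ofReal_neg]

/-- Half the sign of `w₀ - w`. Integrating a derivative against it subtracts from the value of the
antiderivative at `w₀` the average of its two limits at infinity. -/
def halfSign (w₀ w : ℝ) : ℂ := if w ≤ w₀ then 1 / 2 else -1 / 2

theorem norm_halfSign (w₀ w : ℝ) : ‖halfSign w₀ w‖ = 1 / 2 := by
  unfold halfSign
  split_ifs <;> simp

theorem measurable_halfSign (w₀ : ℝ) : Measurable (halfSign w₀) :=
  Measurable.ite measurableSet_Iic measurable_const measurable_const

theorem integrable_halfSign_mul {f : ℝ → ℂ} (hf : Integrable f) (w₀ : ℝ) :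
    Integrable fun w => halfSign w₀ w * f w :=
  hf.bdd_mul (c := 1 / 2) (measurable_halfSign w₀).aestronglyMeasurable
    (Eventually.of_forall fun w => (norm_halfSign w₀ w).le)

theorem integral_halfSign_mul_deriv {f f' : ℝ → ℂ} {l m : ℂ} (hderiv : ∀ w, HasDerivAt f (f' w) w)
    (hint : Integrable f') (hbot : Tendsto f atBot (nhds m)) (htop : Tendsto f atTop (nhds l))
    (w₀ : ℝ) : ∫ w, halfSign w₀ w * f' w = f w₀ - (m + l) / 2 := by
  have hint' := integrable_halfSign_mul hint w₀
  have left : ∫ w in Set.Iic w₀, halfSign w₀ w * f' w = ∫ w in Set.Iic w₀, 1 / 2 * f' w :=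
    setIntegral_congr_fun measurableSet_Iic fun w hw => by
      simp only [halfSign, if_pos (Set.mem_Iic.mp hw)]
  have right : ∫ w in Set.Ioi w₀, halfSign w₀ w * f' w = ∫ w in Set.Ioi w₀, -1 / 2 * f' w :=
    setIntegral_congr_fun measurableSet_Ioi fun w hw => by
      simp only [halfSign, if_neg (not_le.mpr (Set.mem_Ioi.mp hw))]
  rw [← intervalIntegral.integral_Iic_add_Ioi (b := w₀) hint'.integrableOn hint'.integrableOn,
    left, right, integral_const_mul, integral_const_mul,
    integral_Iic_of_hasDerivAt_of_tendsto' (fun w _ => hderiv w) hint.integrableOn hbot,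
    integral_Ioi_of_hasDerivAt_of_tendsto' (fun w _ => hderiv w) hint.integrableOn htop]
  ring

theorem phiTilde_iota_eq_integral {N : ℕ} (hN : 0 < N) {τ : ℂ} (hτ : 0 < τ.im) {t : ℝ}
    (ht : 0 < t) {A B : ℝ} (hA : A ≠ 0) (hB : B ≠ 0) :
    phiTilde τ (iota N t A B).1 (iota N t A B).2 = ∫ w, halfSign (Real.log t) w *
      siegelKernel τ (iota N (Real.exp w) A B).1 (iota N (Real.exp w) A B).2 := by
  have limit : ∀ {F : Filter ℝ} {l : ℝ}, Tendsto (erfIota N τ A B) F (nhds l) →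
      Tendsto (fun w => eC (-(A * B / N : ℝ) * τ) * (erfIota N τ A B w : ℂ)) F
        (nhds (eC (-(A * B / N : ℝ) * τ) * l)) :=
    fun h => ((Complex.continuous_ofReal.tendsto _).comp h).const_mul _
  rw [integral_halfSign_mul_deriv (hasDerivAt_eC_mul_erfIota N hτ.le A B)
    (integrable_and_integral_norm_siegelKernel_iota_exp_le hN hτ hA hB).1
    (limit (tendsto_erfIota_atBot hN hτ hA B))
    (limit (tendsto_erfIota_atTop hN hτ A hB)), phiTilde_iota hN τ ht hA hB]
  push_cast
  ring

/-! ### Inversion of the theta series of `φ̃` -/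

theorem exists_pos_forall_le_abs_add_mul {a L : ℝ} (hL : 0 < L) (ha : ∀ n : ℤ, a + L * n ≠ 0) :
    ∃ d : ℝ, 0 < d ∧ ∀ n : ℤ, d ≤ |a + L * n| := by
  have factor : ∀ n : ℤ, a + L * n = L * (a / L - (-n : ℤ)) := fun n => by
    push_cast
    field_simp
    ring
  refine ⟨|a + L * (-round (a / L) : ℤ)|, abs_pos.mpr (ha _), fun n => ?_⟩
  rw [factor, factor n, abs_mul, abs_mul, neg_neg]
  exact mul_le_mul_of_nonneg_left (round_le _ _) (abs_nonneg L)

theorem summable_exp_neg_mul_abs_mul_abs {k L a b : ℝ} (hk : 0 < k) (hL : 0 < L)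
    (ha : ∀ n : ℤ, a + L * n ≠ 0) (hb : ∀ n : ℤ, b + L * n ≠ 0) :
    Summable fun p : ℤ × ℤ => Real.exp (-k * (|a + L * p.1| * |b + L * p.2|)) := by
  obtain ⟨d, hd, hd_le⟩ := exists_pos_forall_le_abs_add_mul hL ha
  obtain ⟨e, he, he_le⟩ := exists_pos_forall_le_abs_add_mul hL hb
  have product := (summable_exp_neg_mul_abs_add_mul (c := k * e / 2) (by positivity) hL
    a).mul_of_nonneg (summable_exp_neg_mul_abs_add_mul (c := k * d / 2) (by positivity) hL b)
    (fun _ => (Real.exp_pos _).le) (fun _ => (Real.exp_pos _).le)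
  refine Summable.of_nonneg_of_le (fun p => (Real.exp_pos _).le) (fun p => ?_) product
  rw [← Real.exp_add, Real.exp_le_exp]
  have h₁ := mul_le_mul_of_nonneg_right (hd_le p.1) (abs_nonneg (b + L * p.2))
  have h₂ := mul_le_mul_of_nonneg_left (he_le p.2) (abs_nonneg (a + L * p.1))
  linarith [mul_le_mul_of_nonneg_left (add_le_add h₁ h₂) hk.le]

theorem hasSum_latticeTerm_phiTilde {N : ℕ} (hN : 0 < N) {τ : ℂ} (hτ : 0 < τ.im) {t L a b : ℝ}
    (ht : 0 < t) (hL : 0 < L) (ha : ∀ n : ℤ, a + L * n ≠ 0) (hb : ∀ n : ℤ, b + L * n ≠ 0)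
    (η₁ η₂ : ℝ) :
    HasSum (latticeTerm N (phiTilde τ) t L a b η₁ η₂) (∫ w, halfSign (Real.log t) w *
      ∑' p, latticeTerm N (siegelKernel τ) (Real.exp w) L a b η₁ η₂ p) := by
  have bounds := fun p : ℤ × ℤ =>
    integrable_and_integral_norm_siegelKernel_iota_exp_le hN hτ (ha p.1) (hb p.2)
  have integrable : ∀ p, Integrable fun w =>
      halfSign (Real.log t) w * latticeTerm N (siegelKernel τ) (Real.exp w) L a b η₁ η₂ p :=
    fun p => integrable_halfSign_mul ((bounds p).1.mul_const _) _
  have term_eq_integral : ∀ p, latticeTerm N (phiTilde τ) t L a b η₁ η₂ p = ∫ w,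
      halfSign (Real.log t) w * latticeTerm N (siegelKernel τ) (Real.exp w) L a b η₁ η₂ p := by
    intro p
    simp only [latticeTerm, phiTilde_iota_eq_integral hN hτ ht (ha p.1) (hb p.2), ← mul_assoc,
      integral_mul_const]
  have summable_norm : Summable fun p => ∫ w, ‖halfSign (Real.log t) w *
      latticeTerm N (siegelKernel τ) (Real.exp w) L a b η₁ η₂ p‖ := by
    refine Summable.of_nonneg_of_le (fun p => integral_nonneg fun w => norm_nonneg _) (fun p => ?_)
      (summable_exp_neg_mul_abs_mul_abs (k := 2 * Real.pi * τ.im / N) (by positivity) hL ha hb)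
    simp only [latticeTerm, norm_mul, norm_halfSign, norm_eC_ofReal, mul_one, integral_const_mul]
    linarith [(bounds p).2]
  simpa only [← term_eq_integral, tsum_mul_left] using
    hasSum_integral_of_summable_integral_norm integrable summable_norm

theorem tsum_latticeTerm_phiTilde_neg_one_div {N : ℕ} (hN : 0 < N) {τ : ℂ} (hτ : 0 < τ.im)
    {t L a b η₁ η₂ : ℝ} (ht : 0 < t) (hL : 0 < L) (ha : ∀ n : ℤ, a + L * n ≠ 0)
    (hb : ∀ n : ℤ, b + L * n ≠ 0) (hη₁ : ∀ n : ℤ, -η₁ + N / L * n ≠ 0)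
    (hη₂ : ∀ n : ℤ, -η₂ + N / L * n ≠ 0) :
    τ⁻¹ * ∑' p, latticeTerm N (phiTilde (-1 / τ)) t L a b η₁ η₂ p =
      N / L ^ 2 * eC ((a * η₁ + b * η₂) / N : ℝ) *
        ∑' p, latticeTerm N (phiTilde τ) t (N / L) (-η₂) (-η₁) b a p := by
  have hN' : (0 : ℝ) < N := by exact_mod_cast hN
  rw [(hasSum_latticeTerm_phiTilde hN (im_neg_one_div_pos hτ) ht hL ha hb η₁ η₂).tsum_eq,
    (hasSum_latticeTerm_phiTilde hN hτ ht (div_pos hN' hL) hη₂ hη₁ b a).tsum_eq,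
    ← integral_const_mul, ← integral_const_mul]
  congr with w
  rw [mul_left_comm, tsum_latticeTerm_siegelKernel_neg_one_div hN hτ (Real.exp_pos w) hL,
    mul_left_comm]

theorem tsum_int_prod_int_eq_sum_residues {N : ℕ} (hN : 0 < N) {f : ℤ × ℤ → ℂ} (hf : Summable f) :
    ∑' x, f x = ∑ d₁ ∈ Finset.range N, ∑ d₂ ∈ Finset.range N,
      ∑' p : ℤ × ℤ, f (d₁ + N * p.1, d₂ + N * p.2) := by
  have : NeZero N := ⟨hN.ne'⟩
  let residues : (Fin N × Fin N) × (ℤ × ℤ) ≃ ℤ × ℤ :=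
    (Equiv.prodComm _ _).trans ((Equiv.prodProdProdComm ℤ ℤ (Fin N) (Fin N)).trans
      ((Int.divModEquiv N).symm.prodCongr (Int.divModEquiv N).symm))
  have iterated : ∑' c, f (residues c) = ∑' d, ∑' p, f (residues (d, p)) :=
    (residues.summable_iff.mpr hf).tsum_prod
  rw [← residues.tsum_eq f, iterated, tsum_fintype, Fintype.sum_prod_type, Finset.sum_range]
  refine Finset.sum_congr rfl fun d₁ _ => ?_
  rw [Finset.sum_range]
  refine Finset.sum_congr rfl fun d₂ _ => tsum_congr fun p => ?_
  congr 1
  simp [residues, Int.divModEquiv_symm_apply, mul_comm, add_comm]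

theorem thetaTerm_eq_latticeTerm (N : ℕ) (h : ℤ × ℤ) (τ : ℂ) (t ε ε' : ℝ) :
    thetaTerm N h τ t ε ε' = latticeTerm N (phiTilde τ) t N (h.1 + ε) (h.2 + ε) ε' ε' := by
  have shift : ∀ k n : ℤ, ((k + N * n : ℤ) : ℝ) + ε = k + ε + N * n := fun k n => by
    push_cast
    ring
  funext p
  rw [thetaTerm, latticeTerm, shift, shift, ← mul_add, ← shift, ← shift]
  ring_nf

theorem latticeTerm_one_eq_thetaTerm {N : ℕ} (hN : 0 < N) (h d : ℤ × ℤ) (τ : ℂ) (t ε ε' : ℝ)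
    (p : ℤ × ℤ) :
    latticeTerm N (phiTilde τ) t 1 (-ε') (-ε') (h.2 + ε) (h.1 + ε)
        (d.1 + N * p.1, d.2 + N * p.2) =
      eC (-(ε' * (h.1 + h.2)) / N : ℝ) * (eC ((d.1 * h.2 + d.2 * h.1) / N : ℝ) *
        thetaTerm N d τ t (-ε') ε p) := by
  have hN' : (N : ℝ) ≠ 0 := by exact_mod_cast hN.ne'
  have shift : ∀ k n : ℤ, -ε' + 1 * ((k + N * n : ℤ) : ℝ) = ((k + N * n : ℤ) : ℝ) + -ε' :=
    fun k n => by ring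
  have phase : ((h.2 + ε) * (((d.1 + N * p.1 : ℤ) : ℝ) + -ε') +
        (h.1 + ε) * (((d.2 + N * p.2 : ℤ) : ℝ) + -ε')) / N =
      -(ε' * (h.1 + h.2)) / N + (d.1 * h.2 + d.2 * h.1) / N +
        ε * (((d.1 + N * p.1 : ℤ) : ℝ) + ((d.2 + N * p.2 : ℤ) : ℝ) + 2 * -ε') / N +
        (h.2 * p.1 + h.1 * p.2 : ℤ) := by
    push_cast
    field_simp
    ring
  rw [latticeTerm, thetaTerm, shift, shift, phase]
  simp only [Complex.ofReal_add, eC_add, Complex.ofReal_intCast, eC_intCast, mul_one]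
  ring

theorem add_mul_ne_zero_of_ne {N : ℕ} {k : ℤ} {ε : ℝ} (hε : ∀ n : ℤ, ε ≠ (N * n - k : ℤ)) (n : ℤ) :
    k + ε + N * n ≠ 0 := by
  intro hzero
  refine hε (-n) ?_
  push_cast
  linarith

theorem summable_thetaTerm {N : ℕ} (hN : 0 < N) {h : ℤ × ℤ} {τ : ℂ} (hτ : 0 < τ.im)
    {t : ℝ} (ht : 0 < t) {ε : ℝ} (hε₁ : ∀ n : ℤ, ε ≠ (N * n - h.1 : ℤ))
    (hε₂ : ∀ n : ℤ, ε ≠ (N * n - h.2 : ℤ)) (ε' : ℝ) : Summable (thetaTerm N h τ t ε ε') := by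
  have hN' : (0 : ℝ) < N := by exact_mod_cast hN
  rw [thetaTerm_eq_latticeTerm]
  exact (hasSum_latticeTerm_phiTilde hN hτ ht hN' (add_mul_ne_zero_of_ne hε₁)
    (add_mul_ne_zero_of_ne hε₂) ε' ε').summable

theorem tsum_latticeTerm_one_eq_sum_residues {N : ℕ} (hN : 0 < N) (h : ℤ × ℤ) {τ : ℂ}
    (hτ : 0 < τ.im) {t : ℝ} (ht : 0 < t) (ε : ℝ) {ε' : ℝ} (hε' : ∀ n : ℤ, ε' ≠ n) :
    ∑' x, latticeTerm N (phiTilde τ) t 1 (-ε') (-ε') (h.2 + ε) (h.1 + ε) x =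
      eC (-(ε' * (h.1 + h.2)) / N : ℝ) *
        ∑ d₁ ∈ Finset.range N, ∑ d₂ ∈ Finset.range N,
          eC ((d₁ * h.2 + d₂ * h.1) / N : ℝ) *
            ∑' p : ℤ × ℤ, thetaTerm N ((d₁ : ℤ), (d₂ : ℤ)) τ t (-ε') ε p := by
  have nonzero : ∀ n : ℤ, -ε' + 1 * n ≠ 0 := fun n hn => hε' n (by linarith)
  rw [tsum_int_prod_int_eq_sum_residues hN
    (hasSum_latticeTerm_phiTilde hN hτ ht one_pos nonzero nonzero _ _).summable]
  simp only [Finset.mul_sum]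
  refine Finset.sum_congr rfl fun d₁ _ => Finset.sum_congr rfl fun d₂ _ => ?_
  rw [← tsum_mul_left, ← tsum_mul_left]
  exact tsum_congr fun p =>
    latticeTerm_one_eq_thetaTerm hN h (d₁, d₂) τ t ε ε' p

theorem ne_intCast_of_mem_Ioo {ε : ℝ} (hε : ε ∈ Set.Ioo (-(1 / 2) : ℝ) (1 / 2)) (hε0 : ε ≠ 0)
    (n : ℤ) : ε ≠ n := by
  rintro rfl
  have hn : |(n : ℝ)| < 1 := abs_lt.mpr ⟨by linarith [hε.1], by linarith [hε.2]⟩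
  exact hε0 (by exact_mod_cast Int.abs_lt_one_iff.mp (by exact_mod_cast hn))

theorem stmt19_general (N : ℕ) (hN : 0 < N) (h : ℤ × ℤ) (τ : ℂ) (hτ : 0 < τ.im)
    (t : ℝ) (ht : 0 < t) (ε ε' : ℝ) (hε₁ : ∀ n : ℤ, ε ≠ (N * n - h.1 : ℤ))
    (hε₂ : ∀ n : ℤ, ε ≠ (N * n - h.2 : ℤ)) (hε' : ∀ n : ℤ, ε' ≠ n) :
    Summable (thetaTerm N h (-1 / τ) t ε ε') ∧
    (∀ δ : ℤ × ℤ, Summable (thetaTerm N δ τ t (-ε') ε)) ∧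
    τ⁻¹ * ∑' p : ℤ × ℤ, thetaTerm N h (-1 / τ) t ε ε' p =
      (eC ((2 * ε * ε' / N : ℝ) : ℂ) / N) *
        ∑ d₁ ∈ Finset.range N, ∑ d₂ ∈ Finset.range N,
          eC (((((d₁ : ℝ) * (h.2 : ℝ) + (d₂ : ℝ) * (h.1 : ℝ)) / N : ℝ) : ℂ)) *
            ∑' p : ℤ × ℤ, thetaTerm N ((d₁ : ℤ), (d₂ : ℤ)) τ t (-ε') ε p := by
  have hN' : (0 : ℝ) < N := by exact_mod_cast hN
  have hneg : ∀ k : ℤ, -ε' ≠ k := fun k hk => hε' (-k) (by push_cast; linarith)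
  have hdual : ∀ n : ℤ, -ε' + N / N * n ≠ 0 := fun n hn =>
    hε' n (by rw [div_self hN'.ne'] at hn; linarith)
  have phase : eC (((h.1 + ε) * ε' + (h.2 + ε) * ε') / N : ℝ) *
      eC (-(ε' * (h.1 + h.2)) / N : ℝ) = eC (2 * ε * ε' / N : ℝ) := by
    rw [← eC_add, ← Complex.ofReal_add]
    congr 2
    ring
  refine ⟨summable_thetaTerm hN (im_neg_one_div_pos hτ) ht hε₁ hε₂ ε',
    fun δ => summable_thetaTerm hN hτ ht (fun _ => hneg _) (fun _ => hneg _) ε, ?_⟩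
  rw [thetaTerm_eq_latticeTerm, tsum_latticeTerm_phiTilde_neg_one_div hN hτ ht hN'
    (add_mul_ne_zero_of_ne hε₁) (add_mul_ne_zero_of_ne hε₂) hdual hdual, div_self hN'.ne',
    tsum_latticeTerm_one_eq_sum_residues hN h hτ ht ε hε', ← phase]
  push_cast
  field_simp

/-- the Poisson summation identity
`τ⁻¹·Θ̃_h(-1/τ,t;ε,ε') = (e(2εε'/N)/N)·Σ_δ e((δ₁h₂+δ₂h₁)/N)·Θ̃_δ(τ,t;-ε',ε)`,
all series converging absolutely. -/
theorem stmt19 (N : ℕ) (hN : 0 < N) (h : ℤ × ℤ) (τ : ℂ) (hτ : 0 < τ.im)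
    (t : ℝ) (ht : 0 < t) (ε ε' : ℝ)
    (hε : ε ∈ Set.Ioo (-(1/2) : ℝ) (1/2)) (hε0 : ε ≠ 0)
    (hε' : ε' ∈ Set.Ioo (-(1/2) : ℝ) (1/2)) (hε'0 : ε' ≠ 0) :
    Summable (thetaTerm N h (-1 / τ) t ε ε') ∧
    (∀ δ : ℤ × ℤ, Summable (thetaTerm N δ τ t (-ε') ε)) ∧
    τ⁻¹ * ∑' p : ℤ × ℤ, thetaTerm N h (-1 / τ) t ε ε' p =
      (eC ((2 * ε * ε' / N : ℝ) : ℂ) / N) *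
        ∑ d₁ ∈ Finset.range N, ∑ d₂ ∈ Finset.range N,
          eC (((((d₁ : ℝ) * (h.2 : ℝ) + (d₂ : ℝ) * (h.1 : ℝ)) / N : ℝ) : ℂ)) *
            ∑' p : ℤ × ℤ, thetaTerm N ((d₁ : ℤ), (d₂ : ℤ)) τ t (-ε') ε p :=
  stmt19_general N hN h τ hτ t ht ε ε' (fun _ => ne_intCast_of_mem_Ioo hε hε0 _)
    (fun _ => ne_intCast_of_mem_Ioo hε hε0 _) (ne_intCast_of_mem_Ioo hε' hε'0)

end
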